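/- For every integer n ≥ 1, the Krull dimension of the ring ℂ[x_{ij}, y_{ij} (1 ≤ i,j ≤ n)] / I equals n² + n − 2, where X = (x_{ij}) and Y = (y_{ij}) are the generic n×n matrices and I is the ideal generated by the n² entries of XY − YX together with det(X) − 1 and det(Y) − 1. (This ring is the coordinate ring of the commuting variety C(SL_n) = {(a,b) ∈ SL_n × SL_n : ab = ba}, so this says dim C(SL_n) = (n²−1) + (n−1), i.e. the commuting probability p(SL_n) = dim C(SL_n)/(2·dim SL_n) equals 1/2 + 1/(2(n+1)).) -/

import Mathlib

section gens
open MvPolynomial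

/-- The generic matrix `X` of size `n × n`, with entries the variables `x_{ij}`. -/
noncomputable def genX (n : ℕ) :
    Matrix (Fin n) (Fin n)
      (MvPolynomial ((Fin n × Fin n) ⊕ (Fin n × Fin n)) ℂ) :=
  fun i j => X (Sum.inl (i, j))

/-- The generic matrix `Y` of size `n × n`, with entries the variables `y_{ij}`. -/
noncomputable def genY (n : ℕ) :
    Matrix (Fin n) (Fin n)
      (MvPolynomial ((Fin n × Fin n) ⊕ (Fin n × Fin n)) ℂ) :=
  fun i j => X (Sum.inr (i, j))

end gens


theorem lift_chain {R S : Type*} [CommRing R] [CommRing S] [Algebra R S] [Algebra.IsIntegral R S]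
    (hinj : Function.Injective (algebraMap R S)) (n : ℕ) :
    ∀ p : LTSeries (PrimeSpectrum R), p.length = n → ∃ q : LTSeries (PrimeSpectrum S),
      q.length = n ∧ q.last.asIdeal.comap (algebraMap R S) = p.last.asIdeal := by
  induction n with
  | zero =>
    intro p hp
    obtain ⟨Q, -, hQ, hQ'⟩ := Ideal.exists_ideal_over_prime_of_isIntegral (S := S)
      p.last.asIdeal ⊥ (by
        rw [← RingHom.ker_eq_comap_bot, (RingHom.injective_iff_ker_eq_bot _).1 hinj]
        exact bot_le)
    exact ⟨RelSeries.singleton _ ⟨Q, hQ⟩, rfl, hQ'⟩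
  | succ n ih =>
    intro p hp
    obtain ⟨q, hq, hq'⟩ := ih p.eraseLast (by simp [hp])
    have hlt : p.eraseLast.last < p.last := by
      apply p.eraseLast_last_rel_last
      omega
    obtain ⟨Q, hQge, hQ, hQ'⟩ := Ideal.exists_ideal_over_prime_of_isIntegral (S := S)
      p.last.asIdeal q.last.asIdeal (by rw [hq']; exact hlt.le)
    have hlt2 : q.last < (⟨Q, hQ⟩ : PrimeSpectrum S) := by
      refine lt_of_le_of_ne hQge ?_
      intro h
      apply hlt.ne
      ext1
      rw [← hq', ← hQ', h]
    exact ⟨q.snoc ⟨Q, hQ⟩ hlt2, by simp [hq], by simpa using hQ'⟩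

theorem dim_eq_of_integral {R S : Type*} [CommRing R] [CommRing S] [Algebra R S]
    [Algebra.IsIntegral R S]
    (hinj : Function.Injective (algebraMap R S)) : ringKrullDim S = ringKrullDim R := by
  apply le_antisymm
  · refine Order.krullDim_le_of_strictMono (PrimeSpectrum.comap (algebraMap R S)) ?_
    intro I J h
    exact Ideal.IsIntegral.comap_lt_comap (R := R) (I := I.asIdeal) (J := J.asIdeal) h
  · refine iSup_le fun p => ?_
    obtain ⟨q, hq, -⟩ := lift_chain (S := S) hinj p.length p rfl
    rw [← hq]
    exact le_iSup (fun q : LTSeries (PrimeSpectrum S) => ((q.length : ℕ∞) : WithBot ℕ∞)) q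

/-- relatively algebraically closed intermediate field. -/
def RelClosed {L : Type*} [Field L] [Algebra ℂ L] (M : IntermediateField ℂ L) : Prop :=
  ∀ z : L, IsIntegral M z → z ∈ M

theorem card_le_of_acl {L : Type*} [Field L] [Algebra ℂ L] {ι : Type*} [Fintype ι] (v : ι → L)
    (hv : AlgebraicIndependent ℂ v) (s : Finset L)
    (h : ∀ M : IntermediateField ℂ L, RelClosed M → (∀ z ∈ s, z ∈ M) → ∀ i, v i ∈ M) :
    Fintype.card ι ≤ s.card := by
  classical
  let m := AlgebraicIndependent.matroid ℂ L
  obtain ⟨S, hS, hS'⟩ := AlgebraicIndependent.matroid_isFlat_iff.1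
    (m.isFlat_closure (s : Set L))
  let M : IntermediateField ℂ L := { S with
    inv_mem' := fun x hx => by
      have : x⁻¹ ∈ (S : Set L) := by
        rw [hS]
        apply hS'
        exact (isAlgebraic_algebraMap (A := L) (⟨x, hx⟩ : S)).inv
      exact this }
  have hMS : ∀ x, x ∈ M ↔ x ∈ m.closure s := fun x => by rw [← hS]; rfl
  have hM : RelClosed M := by
    intro z hz
    rw [hMS]
    apply hS'
    have : IsAlgebraic M z := hz.isAlgebraic
    exact this
  have hv' := h M hM (fun z hz => by
    rw [hMS]
    exact m.subset_closure (s : Set L) (Set.subset_univ _) hz)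
  have hind : m.Indep (Set.range v) := by
    rw [AlgebraicIndependent.matroid_indep_iff]
    exact hv.to_subtype_range
  have h1 := hind.encard_le_eRk_of_subset (X := m.closure s) (by
    rintro _ ⟨i, rfl⟩
    exact (hMS _).1 (hv' i))
  rw [m.eRk_closure_eq] at h1
  have h2 := h1.trans (m.eRk_le_encard _)
  rw [← Set.image_univ, hv.injective.encard_image] at h2
  simpa using h2


theorem coeff_mem_of_dvd {L : Type*} [Field L] [Algebra ℂ L] (M : IntermediateField ℂ L)
    (hM : RelClosed M) (p q : Polynomial L) (hp : p.Monic) (hq : q.Monic) (hqp : q ∣ p)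
    (hc : ∀ i, p.coeff i ∈ M) (i : ℕ) : q.coeff i ∈ M := by
  apply hM
  have : p ∈ Polynomial.lifts (algebraMap M L) := by
    rw [Polynomial.lifts_iff_coeff_lifts]
    intro n
    exact ⟨⟨_, hc n⟩, rfl⟩
  obtain ⟨p', hp', -, hmon⟩ := Polynomial.lifts_and_natDegree_eq_and_monic this hp
  exact Polynomial.isIntegral_coeff_of_dvd p' q hmon hq (by rw [hp']; exact hqp) i

open Polynomial Module in
theorem canon {L : Type*} [Field L] [Algebra ℂ L] {n : ℕ} (x : Matrix (Fin n) (Fin n) L) :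
    ∃ J g : Matrix (Fin n) (Fin n) L, IsUnit g.det ∧ x * g = g * J ∧
      ∀ M : IntermediateField ℂ L, RelClosed M → (∀ i, x.charpoly.coeff i ∈ M) →
        ∀ i j, J i j ∈ M := by
  classical
  let φ : Module.End L (Fin n → L) := Matrix.toLin' x
  let V := AEval' φ
  have hkill : ∀ v : V, x.charpoly • v = 0 := by
    intro v
    apply (AEval'.of φ).symm.injective
    rw [map_zero]
    have := AEval.of_symm_smul (a := φ) x.charpoly v
    refine this.trans ?_
    have : aeval φ x.charpoly = 0 := by
      have h := Matrix.aeval_self_charpoly x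
      have h2 : aeval φ x.charpoly = Matrix.toLinAlgEquiv' (aeval x x.charpoly) := by
        rw [← Polynomial.aeval_algHom_apply]
        rfl
      rw [h2, h, map_zero]
    rw [this, zero_smul]
  have htors : Module.IsTorsion L[X] V := by
    intro v
    exact ⟨⟨x.charpoly, mem_nonZeroDivisors_of_ne_zero x.charpoly_monic.ne_zero⟩, hkill v⟩
  obtain ⟨ι, _, p, hp, e, ⟨E⟩⟩ := Module.equiv_directSum_of_isTorsion htors
  let q : ι → L[X] := fun i => p i ^ e i
  have hq : ∀ i, q i ≠ 0 := fun i => pow_ne_zero _ (hp i).ne_zero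
  let c : ∀ i, (L[X] ⧸ L[X] ∙ p i ^ e i) ≃+ AdjoinRoot (q i) := fun i => AddEquiv.refl _
  have hc : ∀ i (f : L[X]) w, c i (f • w) = AdjoinRoot.mk (q i) f * c i w := by
    intro i f w
    obtain ⟨w, rfl⟩ := Submodule.Quotient.mk_surjective _ w
    rfl
  let F0 : V ≃+ (∀ i, AdjoinRoot (q i)) :=
    (E.trans (DirectSum.linearEquivFunOnFintype _ _ _)).toAddEquiv.trans (AddEquiv.piCongrRight c)
  have hF0 : ∀ (f : L[X]) v i, F0 (f • v) i = AdjoinRoot.mk (q i) f * F0 v i := by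
    intro f v i
    change c i (DirectSum.linearEquivFunOnFintype L[X] _ _ (E (f • v)) i) = _
    rw [map_smul, map_smul, Pi.smul_apply, hc]
    rfl
  let F : (Fin n → L) ≃ₗ[L] (∀ i, AdjoinRoot (q i)) :=
    { (AEval'.of φ).toAddEquiv.trans F0 with
      map_smul' := by
        intro r v
        change F0 (AEval'.of φ (r • v)) = r • F0 (AEval'.of φ v)
        rw [map_smul, ← AEval.C_smul]
        funext i
        rw [hF0, Pi.smul_apply, AdjoinRoot.mk_C, Algebra.smul_def]
        rfl }
  have hF : ∀ v i, F (φ v) i = AdjoinRoot.root (q i) * F v i := by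
    intro v i
    change F0 (AEval'.of φ (φ v)) i = _ * F0 (AEval'.of φ v) i
    rw [← AEval'.X_smul_of, hF0, AdjoinRoot.mk_X]
  have hdvd : ∀ i, (minpoly L (AdjoinRoot.root (q i))) ∣ x.charpoly := by
    intro i
    apply minpoly.dvd
    have h := hF0 x.charpoly (F0.symm (fun _ => 1)) i
    rw [hkill, map_zero, AddEquiv.apply_symm_apply, mul_one] at h
    rw [AdjoinRoot.aeval_eq]
    exact h.symm
  let b0 : Basis (Σ i, Fin (AdjoinRoot.powerBasis (hq i)).dim) L (∀ i, AdjoinRoot (q i)) :=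
    Pi.basis (fun i => (AdjoinRoot.powerBasis (hq i)).basis)
  let b1 := b0.map F.symm
  let σ := b1.indexEquiv (Pi.basisFun L (Fin n))
  let b := b1.reindex σ
  refine ⟨LinearMap.toMatrix b b φ, (Pi.basisFun L (Fin n)).toMatrix b, ?_, ?_, ?_⟩
  · have := (Pi.basisFun L (Fin n)).toMatrix_mul_toMatrix_flip b
    exact Matrix.isUnit_det_of_right_inverse this
  · have h := basis_toMatrix_mul_linearMap_toMatrix b (Pi.basisFun L (Fin n)) b φ
    have h2 := linearMap_toMatrix_mul_basis_toMatrix b (Pi.basisFun L (Fin n)) (Pi.basisFun L (Fin n)) φ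
    rw [h, ← h2]
    congr 1
    simp [φ, LinearMap.toMatrix_eq_toMatrix']
  · intro M hM hc' i j
    have hmem : ∀ s t, b1.repr (φ (b1 t)) s ∈ M := by
      rintro ⟨i, a⟩ ⟨i', a'⟩
      have h1 : b1.repr (φ (b1 ⟨i', a'⟩)) ⟨i, a⟩ =
          (AdjoinRoot.powerBasis (hq i)).basis.repr (AdjoinRoot.root (q i) * b0 ⟨i', a'⟩ i) a := by
        have : b1.repr (φ (b1 ⟨i', a'⟩)) ⟨i, a⟩ =
          (AdjoinRoot.powerBasis (hq i)).basis.repr (F (φ (b1 ⟨i', a'⟩)) i) a := by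
          simp [b1, b0]
        rw [this, hF]
        simp [b1]
      rw [h1]
      by_cases hii : i = i'
      · subst hii
        have h2 := PowerBasis.leftMulMatrix (AdjoinRoot.powerBasis (hq i))
        have h3 := congrFun (congrFun h2 a) a'
        rw [Algebra.leftMulMatrix_eq_repr_mul, Matrix.of_apply] at h3
        have h4 : b0 ⟨i, a'⟩ i = (AdjoinRoot.powerBasis (hq i)).basis a' := by
          simp [b0]
        rw [h4]
        rw [AdjoinRoot.powerBasis_gen] at h3
        rw [h3]
        split_ifs
        · apply neg_mem
          rw [PowerBasis.minpolyGen_eq, AdjoinRoot.powerBasis_gen]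
          refine coeff_mem_of_dvd M hM x.charpoly _ x.charpoly_monic (minpoly.monic ?_) (hdvd i) hc' _
          have := (AdjoinRoot.powerBasis (hq i)).isIntegral_gen
          rwa [AdjoinRoot.powerBasis_gen] at this
        · exact one_mem M
        · exact zero_mem M
      · have h4 : b0 ⟨i', a'⟩ i = 0 := by
          simp [b0, Pi.single_eq_of_ne hii]
        rw [h4, mul_zero, map_zero]
        exact zero_mem M
    have : LinearMap.toMatrix b b φ i j = b1.repr (φ (b1 (σ.symm j))) (σ.symm i) := by
      simp [b, LinearMap.toMatrix_apply]
    rw [this]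
    exact hmem _ _



theorem coords {L ι : Type*} [Field L] [Fintype ι] (W : Submodule L (ι → L)) :
    ∃ κ : Finset ι, κ.card = Module.finrank L W ∧ (∀ w ∈ W, (∀ i ∈ κ, w i = 0) → w = 0) ∧
      (∀ u : ι → L, ∃ w ∈ W, ∀ i ∈ κ, w i = u i) := by
  classical
  let f : ι → Module.Dual L W := fun i => (LinearMap.proj i).comp W.subtype
  obtain ⟨κ, a, ha, hsp, hli⟩ := exists_linearIndependent' L f
  have : Fintype κ := Fintype.ofInjective a ha
  let r : W →ₗ[L] (κ → L) := LinearMap.pi (fun k => f (a k))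
  have hker : ∀ w : W, r w = 0 → w = 0 := by
    intro w hw
    have h0 : ∀ g ∈ Submodule.span L (Set.range (f ∘ a)), g w = 0 := by
      intro g hg
      induction hg using Submodule.span_induction with
      | mem g hg =>
        obtain ⟨k, rfl⟩ := hg
        exact congrFun hw k
      | zero => rfl
      | add g h _ _ hg hh => rw [LinearMap.add_apply, hg, hh, add_zero]
      | smul c g _ hg => rw [LinearMap.smul_apply, hg, smul_zero]
    ext i
    exact h0 (f i) (by rw [hsp]; exact Submodule.subset_span ⟨i, rfl⟩)
  have hinj : Function.Injective r := by
    rw [← LinearMap.ker_eq_bot, LinearMap.ker_eq_bot']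
    exact hker
  have h1 : Fintype.card κ ≤ Module.finrank L W := by
    rw [← Subspace.dual_finrank_eq]
    exact hli.fintype_card_le_finrank
  have h2 : Module.finrank L W ≤ Fintype.card κ := by
    rw [← Module.finrank_fintype_fun_eq_card L]
    exact LinearMap.finrank_le_finrank_of_injective hinj
  have h3 : Module.finrank L W = Module.finrank L (κ → L) := by
    rw [Module.finrank_fintype_fun_eq_card]; omega
  have hsurj : Function.Surjective r :=
    (LinearMap.injective_iff_surjective_of_finrank_eq_finrank h3).1 hinj
  refine ⟨Finset.univ.map ⟨a, ha⟩, ?_, ?_, ?_⟩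
  · rw [Finset.card_map, Finset.card_univ]; omega
  · intro w hw h
    have := hker ⟨w, hw⟩ (by
      funext k
      exact h (a k) (by simp))
    exact congrArg Subtype.val this
  · intro u
    obtain ⟨w, hw⟩ := hsurj (fun k => u (a k))
    refine ⟨w, w.2, ?_⟩
    intro i hi
    simp only [Finset.mem_map, Finset.mem_univ, true_and, Function.Embedding.coeFn_mk] at hi
    obtain ⟨k, rfl⟩ := hi
    exact congrFun hw k

/-- matrix of a function on pairs. -/
def toMat {L : Type*} [Field L] (n : ℕ) :
    (Fin n × Fin n → L) →ₗ[L] Matrix (Fin n) (Fin n) L where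
  toFun u := Matrix.of fun i j => u (i, j)
  map_add' _ _ := rfl
  map_smul' _ _ := rfl

/-- intertwiners. -/
noncomputable def interW {L : Type*} [Field L] {n : ℕ} (A B : Matrix (Fin n) (Fin n) L) :
    Submodule L (Fin n × Fin n → L) :=
  LinearMap.ker ((LinearMap.mulLeft L A).comp (toMat n) - (LinearMap.mulRight L B).comp (toMat n))

theorem mem_interW {L : Type*} [Field L] {n : ℕ} (A B : Matrix (Fin n) (Fin n) L) (u) :
    u ∈ interW A B ↔ A * toMat n u = toMat n u * B := by
  simp [interW, LinearMap.mem_ker, sub_eq_zero]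

theorem toMat_uncurry {L : Type*} [Field L] {n : ℕ} (A : Matrix (Fin n) (Fin n) L) :
    toMat n (fun p => A p.1 p.2) = A := rfl

theorem exists_g {L : Type*} [Field L] [Algebra ℂ L] {n : ℕ}
    (x J g0 : Matrix (Fin n) (Fin n) L) (hg0 : IsUnit g0.det) (h : x * g0 = g0 * J) :
    ∃ (κ : Finset (Fin n × Fin n)) (g : Matrix (Fin n) (Fin n) L),
      Module.finrank L (interW x x) ≤ κ.card ∧ IsUnit g.det ∧ x * g = g * J ∧
      ∀ p ∈ κ, g p.1 p.2 ∈ Set.range (algebraMap ℂ L) := by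
  classical
  obtain ⟨κ, hcard, hinj, hex⟩ := coords (interW x J)
  let B : Fin n × Fin n → (Fin n × Fin n → L) := fun s => (hex (Pi.single s 1)).choose
  have hBW : ∀ s, B s ∈ interW x J := fun s => (hex (Pi.single s 1)).choose_spec.1
  have hBκ : ∀ s, ∀ i ∈ κ, B s i = (Pi.single s 1 : Fin n × Fin n → L) i :=
    fun s => (hex (Pi.single s 1)).choose_spec.2
  have hcomb : ∀ t : Fin n × Fin n → L, ∀ i ∈ κ, (∑ s ∈ κ, t s • B s) i = t i := by
    intro t i hi
    rw [Finset.sum_apply]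
    simp only [Pi.smul_apply, hBκ _ i hi, Pi.single_apply, smul_eq_mul, mul_ite, mul_one, mul_zero]
    rw [Finset.sum_ite_eq]
    simp [hi]
  let P : MvPolynomial (Fin n × Fin n) L :=
    (∑ s ∈ κ, (MvPolynomial.X s : MvPolynomial (Fin n × Fin n) L) •
      (toMat n (B s)).map MvPolynomial.C).det
  have hP : ∀ t, MvPolynomial.eval t P = (toMat n (∑ s ∈ κ, t s • B s)).det := by
    intro t
    rw [RingHom.map_det]
    congr 1
    ext i j
    simp [Matrix.sum_apply]
  have hP0 : P ≠ 0 := by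
    intro h0
    have h1 := hP (fun p => g0 p.1 p.2)
    have h2 : (∑ s ∈ κ, g0 s.1 s.2 • B s) - (fun p => g0 p.1 p.2) = 0 := by
      apply hinj
      · apply sub_mem
        · exact sum_mem fun s _ => Submodule.smul_mem _ _ (hBW s)
        · rw [mem_interW, toMat_uncurry, h]
      · intro i hi
        rw [Pi.sub_apply, hcomb (fun s => g0 s.1 s.2) i hi, sub_self]
    rw [sub_eq_zero.1 h2, toMat_uncurry, h0, map_zero] at h1
    exact hg0.ne_zero h1.symm
  obtain ⟨t, ht, htP⟩ : ∃ t ∈ Set.pi Set.univ (fun _ : Fin n × Fin n => Set.range (algebraMap ℂ L)),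
      MvPolynomial.eval t P ≠ 0 := by
    by_contra! hcon
    apply hP0
    refine MvPolynomial.funext_set (fun _ => Set.range (algebraMap ℂ L)) ?_ ?_
    · intro _
      exact Set.infinite_range_of_injective (algebraMap ℂ L).injective
    · intro t ht
      rw [hcon t ht, map_zero]
  refine ⟨κ, toMat n (∑ s ∈ κ, t s • B s), ?_, ?_, ?_, ?_⟩
  · rw [hcard]
    let f : interW x x →ₗ[L] interW x J :=
      { toFun := fun u => ⟨fun p => (toMat n u.1 * g0) p.1 p.2, by
          rw [mem_interW, toMat_uncurry, ← Matrix.mul_assoc, (mem_interW x x u.1).1 u.2,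
            Matrix.mul_assoc, h, Matrix.mul_assoc]⟩
        map_add' := by
          intro u v
          ext p
          simp [Matrix.add_mul]
        map_smul' := by
          intro u v
          ext p
          simp }
    refine LinearMap.finrank_le_finrank_of_injective (f := f) ?_
    intro u v huv
    have h1 : toMat n u.1 * g0 = toMat n v.1 * g0 := by
      ext i j
      exact congrFun (congrArg Subtype.val huv) (i, j)
    have h2 : toMat n u.1 = toMat n v.1 := by
      have := congrArg (· * g0⁻¹) h1
      simpa [Matrix.mul_assoc, Matrix.mul_nonsing_inv _ hg0] using this
    ext p
    exact congrFun (congrFun h2 p.1) p.2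
  · rw [← hP]
    exact isUnit_iff_ne_zero.2 htP
  · rw [← mem_interW]
    exact sum_mem fun s _ => Submodule.smul_mem _ _ (hBW s)
  · intro p hp
    have := hcomb t p hp
    change (∑ s ∈ κ, t s • B s) p ∈ _
    rw [this]
    exact ht p trivial



theorem mul_mem_mat {L : Type*} [Field L] [Algebra ℂ L] {n : ℕ} (M : IntermediateField ℂ L)
    (A B : Matrix (Fin n) (Fin n) L) (hA : ∀ i j, A i j ∈ M) (hB : ∀ i j, B i j ∈ M) (i j) :
    (A * B) i j ∈ M := by
  rw [Matrix.mul_apply]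
  exact sum_mem fun k _ => mul_mem (hA i k) (hB k j)

theorem det_mem_mat {L : Type*} [Field L] [Algebra ℂ L] {n : ℕ} (M : IntermediateField ℂ L)
    (A : Matrix (Fin n) (Fin n) L) (hA : ∀ i j, A i j ∈ M) : A.det ∈ M := by
  have : A = (algebraMap M L).mapMatrix (Matrix.of fun i j => (⟨A i j, hA i j⟩ : M)) := by
    ext i j; rfl
  rw [this, ← RingHom.map_det]
  exact Subtype.property _

theorem inv_mem_mat {L : Type*} [Field L] [Algebra ℂ L] {n : ℕ} (M : IntermediateField ℂ L)
    (A : Matrix (Fin n) (Fin n) L) (hA : ∀ i j, A i j ∈ M) (i j) : A⁻¹ i j ∈ M := by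
  rw [Matrix.inv_def, Matrix.smul_apply, smul_eq_mul, Ring.inverse_eq_inv']
  apply mul_mem (inv_mem (det_mem_mat M A hA))
  rw [Matrix.adjugate_apply]
  apply det_mem_mat
  intro a b
  by_cases hab : a = j
  · subst hab
    rw [Matrix.updateRow_self]
    by_cases hb : b = i
    · subst hb; simp
    · simp [Pi.single_eq_of_ne hb]
  · rw [Matrix.updateRow_ne hab]
    exact hA a b

theorem pow_root_mem {L : Type*} [Field L] [Algebra ℂ L] {M : IntermediateField ℂ L}
    (hM : RelClosed M) {n : ℕ} (hn : 1 ≤ n) (z : L) (hz : z ^ n ∈ M) : z ∈ M := by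
  apply hM
  refine IsIntegral.of_pow (by omega : 0 < n) ?_
  exact isIntegral_algebraMap (R := M) (x := ⟨z ^ n, hz⟩)

theorem inter_unique_mem {L : Type*} [Field L] [Algebra ℂ L] {n : ℕ} (M : IntermediateField ℂ L)
    (x : Matrix (Fin n) (Fin n) L) (hx : ∀ i j, x i j ∈ M) (κ : Finset (Fin n × Fin n))
    (hκ : ∀ w ∈ interW x x, (∀ i ∈ κ, w i = 0) → w = 0)
    (u : Fin n × Fin n → L) (hu : u ∈ interW x x) (huM : ∀ i ∈ κ, u i ∈ M) (i) : u i ∈ M := by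
  obtain ⟨π, hπ⟩ := LinearMap.exists_leftInverse_of_injective (Algebra.linearMap M L)
    (LinearMap.ker_eq_bot.2 (algebraMap M L).injective)
  have hπ1 : ∀ m : M, π (m : L) = m := fun m => LinearMap.congr_fun hπ m
  have hπl : ∀ a ∈ M, ∀ z : L, ((π (a * z) : M) : L) = a * π z := by
    intro a ha z
    have := π.map_smul (⟨a, ha⟩ : M) z
    rw [Algebra.smul_def] at this
    change π (a * z) = _ at this
    rw [this]; rfl
  let w : Fin n × Fin n → L := fun p => (π (u p) : L)
  have hw : w ∈ interW x x := by
    rw [mem_interW] at hu ⊢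
    ext i j
    have h1 := congrArg (fun z : L => (π z : L)) (congrFun (congrFun hu i) j)
    simp only [Matrix.mul_apply, map_sum] at h1 ⊢
    push_cast at h1
    calc _ = ∑ k, ((π (x i k * toMat n u k j) : M) : L) :=
          Finset.sum_congr rfl fun k _ => (hπl _ (hx i k) _).symm
      _ = _ := h1
      _ = _ := Finset.sum_congr rfl fun k _ => by
          rw [mul_comm, hπl _ (hx k j), mul_comm]; rfl
  have := hκ (w - u) (sub_mem hw hu) (by
    intro i hi
    have := hπ1 ⟨u i, huM i hi⟩
    simp only [Pi.sub_apply, w]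
    rw [sub_eq_zero]
    exact congrArg Subtype.val this)
  have h2 : w i = u i := congrFun (sub_eq_zero.1 this) i
  rw [← h2]
  exact (π (u i)).2

theorem upper {L : Type*} [Field L] [Algebra ℂ L] {n : ℕ} (hn : 1 ≤ n)
    (x y : Matrix (Fin n) (Fin n) L) (hx : x.det = 1) (hy : y.det = 1) (hxy : x * y = y * x) :
    ∃ s : Finset L, s.card ≤ n ^ 2 + n - 2 ∧
      ∀ M : IntermediateField ℂ L, RelClosed M → (∀ z ∈ s, z ∈ M) →
        (∀ i j, x i j ∈ M) ∧ (∀ i j, y i j ∈ M) := by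
  classical
  obtain ⟨J, g0, hg0, hxg0, hJ⟩ := canon x
  obtain ⟨κ, g, hκ, hg, hxg, hgκ⟩ := exists_g x J g0 hg0 hxg0
  obtain ⟨τ, hτ, hτinj, -⟩ := coords (interW x x)
  let yv : Fin n × Fin n → L := fun p => y p.1 p.2
  have hyv : yv ∈ interW x x := by rw [mem_interW, toMat_uncurry, hxy]
  obtain ⟨s0, hs0, hs0'⟩ : ∃ s0 ∈ τ, yv s0 ≠ 0 := by
    by_contra! hcon
    have h0 := hτinj yv hyv hcon
    have : y = 0 := by
      ext i j
      exact congrFun h0 (i, j)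
    have : Nonempty (Fin n) := ⟨⟨0, hn⟩⟩
    rw [‹y = 0›, Matrix.det_zero] at hy
    exact zero_ne_one hy
  let u : Fin n × Fin n → L := (yv s0)⁻¹ • yv
  have hu : u ∈ interW x x := Submodule.smul_mem _ _ hyv
  refine ⟨(Finset.Ico 1 n).image x.charpoly.coeff ∪ ((κᶜ).image fun p => g p.1 p.2) ∪
    (τ.erase s0).image u, ?_, ?_⟩
  · have h1 := Finset.card_union_le ((Finset.Ico 1 n).image x.charpoly.coeff ∪
      ((κᶜ).image fun p => g p.1 p.2)) ((τ.erase s0).image u)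
    have h2 := Finset.card_union_le ((Finset.Ico 1 n).image x.charpoly.coeff)
      ((κᶜ).image fun p => g p.1 p.2)
    have h3 := Finset.card_image_le (s := Finset.Ico 1 n) (f := x.charpoly.coeff)
    have h4 := Finset.card_image_le (s := κᶜ) (f := fun p => g p.1 p.2)
    have h5 := Finset.card_image_le (s := τ.erase s0) (f := u)
    rw [Finset.card_erase_of_mem hs0] at h5
    have h6 : 1 ≤ τ.card := Finset.card_pos.2 ⟨s0, hs0⟩
    rw [Finset.card_compl, Fintype.card_prod, Fintype.card_fin] at h4
    rw [Nat.card_Ico] at h3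
    have h7 := Finset.card_le_univ κ
    rw [Fintype.card_prod, Fintype.card_fin] at h7
    rw [pow_two]
    omega
  · intro M hM hs
    have hcM : ∀ i, x.charpoly.coeff i ∈ M := by
      intro i
      rcases Nat.eq_zero_or_pos i with rfl | hi
      · have := Matrix.det_eq_sign_charpoly_coeff x
        rw [hx, Fintype.card_fin] at this
        have h2 : x.charpoly.coeff 0 = (-1) ^ n := by
          rcases neg_one_pow_eq_or L n with h | h <;> rw [h] at this ⊢
          · simpa using this.symm
          · rw [neg_one_mul] at this
            rw [this, neg_neg]
        rw [h2]
        exact pow_mem (neg_mem (one_mem _)) _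
      · have hdeg : x.charpoly.natDegree = n := by
          have : Nontrivial L := inferInstance
          rw [Matrix.charpoly_natDegree_eq_dim, Fintype.card_fin]
        rcases lt_trichotomy i n with h | h | h
        · apply hs
          simp only [Finset.mem_union, Finset.mem_image, Finset.mem_Ico]
          exact Or.inl (Or.inl ⟨i, ⟨hi, h⟩, rfl⟩)
        · have := x.charpoly_monic.coeff_natDegree
          rw [hdeg] at this
          rw [h, this]
          exact one_mem _
        · rw [Polynomial.coeff_eq_zero_of_natDegree_lt (by omega)]
          exact zero_mem _
    have hJM := hJ M hM hcM
    have hgM : ∀ i j, g i j ∈ M := by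
      intro i j
      by_cases hp : (i, j) ∈ κ
      · obtain ⟨c, hc⟩ := hgκ _ hp
        rw [← hc]
        exact M.algebraMap_mem c
      · apply hs
        simp only [Finset.mem_union, Finset.mem_image, Finset.mem_compl]
        exact Or.inl (Or.inr ⟨(i, j), hp, rfl⟩)
    have hxM : ∀ i j, x i j ∈ M := by
      have : x = g * J * g⁻¹ := by
        rw [← hxg, Matrix.mul_assoc, Matrix.mul_nonsing_inv _ hg, Matrix.mul_one]
      rw [this]
      exact mul_mem_mat M _ _ (mul_mem_mat M _ _ hgM hJM) (inv_mem_mat M _ hgM)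
    have huM : ∀ p, u p ∈ M := by
      apply inter_unique_mem M x hxM τ hτinj u hu
      intro p hp
      by_cases hps : p = s0
      · rw [hps]
        simp only [u, Pi.smul_apply, smul_eq_mul]
        rw [inv_mul_cancel₀ hs0']
        exact one_mem _
      · apply hs
        simp only [Finset.mem_union, Finset.mem_image]
        exact Or.inr ⟨p, Finset.mem_erase.2 ⟨hps, hp⟩, rfl⟩
    have hyu : y = yv s0 • toMat n u := by
      rw [← map_smul]
      simp only [u]
      rw [smul_inv_smul₀ hs0', toMat_uncurry]
    have hdet : yv s0 ^ n * (toMat n u).det = 1 := by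
      rw [← hy]
      conv_rhs => rw [hyu]
      rw [Matrix.det_smul, Fintype.card_fin]
    have hyM : yv s0 ∈ M := by
      apply pow_root_mem hM hn
      rw [eq_inv_of_mul_eq_one_left hdet]
      exact inv_mem (det_mem_mat M _ fun i j => huM (i, j))
    refine ⟨hxM, ?_⟩
    rw [hyu]
    intro i j
    exact mul_mem hyM (huM (i, j))



section lower
open MvPolynomial

/-- generic matrix. -/
noncomputable def gX (n : ℕ) :
    Matrix (Fin n) (Fin n) (MvPolynomial ((Fin n × Fin n) ⊕ Fin n) ℂ) :=
  Matrix.of fun i j => X (Sum.inl (i, j))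

/-- generic polynomial in the generic matrix. -/
noncomputable def gY (n : ℕ) :
    Matrix (Fin n) (Fin n) (MvPolynomial ((Fin n × Fin n) ⊕ Fin n) ℂ) :=
  ∑ k : Fin n, (X (Sum.inr k) : MvPolynomial ((Fin n × Fin n) ⊕ Fin n) ℂ) • gX n ^ (k : ℕ)

/-- Krylov matrix. -/
noncomputable def gC {n : ℕ} (hn : 1 ≤ n) {A : Type*} [CommRing A] (x : Matrix (Fin n) (Fin n) A) :
    Matrix (Fin n) (Fin n) A :=
  Matrix.of fun i k => (x ^ (k : ℕ)) i ⟨0, hn⟩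

theorem map_gX {n : ℕ} {A : Type*} [CommRing A] [Algebra ℂ A] (v : (Fin n × Fin n) ⊕ Fin n → A) :
    (aeval v : _ →ₐ[ℂ] A).toRingHom.mapMatrix (gX n) = Matrix.of fun i j => v (Sum.inl (i, j)) := by
  ext i j
  simp [gX]

theorem map_gY {n : ℕ} {A : Type*} [CommRing A] [Algebra ℂ A] (v : (Fin n × Fin n) ⊕ Fin n → A) :
    (aeval v : _ →ₐ[ℂ] A).toRingHom.mapMatrix (gY n) =
      ∑ k : Fin n, v (Sum.inr k) • (Matrix.of fun i j => v (Sum.inl (i, j))) ^ (k : ℕ) := by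
  rw [gY, map_sum]
  refine Finset.sum_congr rfl fun k _ => ?_
  rw [← map_gX v, ← map_pow]
  ext i j
  simp

theorem map_gC {n : ℕ} (hn : 1 ≤ n) {A : Type*} [CommRing A] [Algebra ℂ A]
    (v : (Fin n × Fin n) ⊕ Fin n → A) :
    (aeval v : _ →ₐ[ℂ] A).toRingHom.mapMatrix (gC hn (gX n)) =
      gC hn (Matrix.of fun i j => v (Sum.inl (i, j))) := by
  rw [← map_gX v]
  ext i j
  simp only [gC, Matrix.of_apply, ← map_pow]
  rfl

theorem det_gX_ne (n : ℕ) : (gX n).det ≠ 0 := by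
  intro h
  have h1 := congrArg (aeval (R := ℂ) (Sum.elim (fun p : Fin n × Fin n => (1 : Matrix (Fin n) (Fin n) ℂ) p.1 p.2)
    (fun _ : Fin n => (0 : ℂ)))).toRingHom h
  rw [RingHom.map_det, map_gX, map_zero] at h1
  exact one_ne_zero ((Matrix.det_one (n := Fin n) (R := ℂ)).symm.trans h1)

theorem det_gY_ne {n : ℕ} (hn : 1 ≤ n) : (gY n).det ≠ 0 := by
  intro h
  have h1 := congrArg (aeval (R := ℂ) (Sum.elim (fun p : Fin n × Fin n => (1 : Matrix (Fin n) (Fin n) ℂ) p.1 p.2)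
    (Pi.single (⟨0, hn⟩ : Fin n) (1 : ℂ)))).toRingHom h
  rw [RingHom.map_det, map_gY, map_zero] at h1
  have h2 : (Matrix.of fun i j : Fin n => (1 : Matrix (Fin n) (Fin n) ℂ) i j) = 1 := rfl
  simp only [Sum.elim_inl, Sum.elim_inr] at h1
  rw [h2, Finset.sum_eq_single ⟨0, hn⟩] at h1
  · simp at h1
  · intro b _ hb
    rw [Pi.single_eq_of_ne hb, zero_smul]
  · simp

theorem det_gC_ne {n : ℕ} (hn : 1 ≤ n) : (gC hn (gX n)).det ≠ 0 := by
  intro h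
  let N : Matrix (Fin n) (Fin n) ℂ := Matrix.of fun i j => if (i : ℕ) = j + 1 then 1 else 0
  have h1 := congrArg (aeval (R := ℂ) (Sum.elim (fun p : Fin n × Fin n => N p.1 p.2)
    (fun _ : Fin n => (0 : ℂ)))).toRingHom h
  rw [RingHom.map_det, map_gC, map_zero] at h1
  have h2 : (Matrix.of fun i j : Fin n => N i j) = N := rfl
  simp only [Sum.elim_inl] at h1
  rw [h2] at h1
  have h3 : ∀ k : ℕ, ∀ i : Fin n, (N ^ k) i ⟨0, hn⟩ = if (i : ℕ) = k then 1 else 0 := by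
    intro k
    induction k with
    | zero => intro i; simp [Matrix.one_apply, Fin.ext_iff]
    | succ k ih =>
      intro i
      rw [pow_succ', Matrix.mul_apply]
      simp only [ih, N, Matrix.of_apply, mul_ite, mul_one, mul_zero]
      by_cases hi : (i : ℕ) = k + 1
      · have hk : k < n := by have := i.2; omega
        rw [Finset.sum_eq_single ⟨k, hk⟩]
        · simp [hi]
        · intro b _ hb
          rw [if_neg]
          intro hbk
          exact hb (Fin.ext hbk)
        · simp
      · rw [if_neg hi]
        apply Finset.sum_eq_zero
        intro b _
        split_ifs with h4 h5
        · omega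
        · rfl
        · rfl
  have h4 : gC hn N = 1 := by
    ext i k
    simp [gC, h3, Matrix.one_apply, Fin.ext_iff]
  rw [h4, Matrix.det_one] at h1
  exact one_ne_zero h1

theorem lower {n : ℕ} (hn : 1 ≤ n) : ∃ (L : Type) (_ : Field L) (_ : Algebra ℂ L)
    (x y : Matrix (Fin n) (Fin n) L) (v : (Fin n × Fin n) ⊕ Fin n → L) (δ ε : L),
    x.det = 1 ∧ y.det = 1 ∧ x * y = y * x ∧ AlgebraicIndependent ℂ v ∧
    ∀ M : IntermediateField ℂ L, (∀ i j, x i j ∈ M) → (∀ i j, y i j ∈ M) → δ ∈ M → ε ∈ M →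
      ∀ i, v i ∈ M := by
  let A := MvPolynomial ((Fin n × Fin n) ⊕ Fin n) ℂ
  let K := FractionRing A
  let L := AlgebraicClosure K
  let v : (Fin n × Fin n) ⊕ Fin n → L := fun i => algebraMap K L (algebraMap A K (X i))
  have hv : AlgebraicIndependent ℂ v := by
    have h0 : aeval v = ((IsScalarTower.toAlgHom ℂ K L).comp (IsScalarTower.toAlgHom ℂ A K)) := by
      ext i
      simp [v]
      rfl
    rw [algebraicIndependent_iff_injective_aeval, h0]
    exact (algebraMap K L).injective.comp (IsFractionRing.injective A K)
  have hvi : Function.Injective (aeval (R := ℂ) v).toRingHom := hv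
  let Xm : Matrix (Fin n) (Fin n) L := Matrix.of fun i j => v (Sum.inl (i, j))
  let Ym : Matrix (Fin n) (Fin n) L := ∑ k : Fin n, v (Sum.inr k) • Xm ^ (k : ℕ)
  have hX : Xm.det ≠ 0 := by
    have e : Xm = (aeval (R := ℂ) v).toRingHom.mapMatrix (gX n) := (map_gX v).symm
    rw [e, ← RingHom.map_det]
    exact (map_ne_zero_iff _ hvi).2 (det_gX_ne n)
  have hY : Ym.det ≠ 0 := by
    have e : Ym = (aeval (R := ℂ) v).toRingHom.mapMatrix (gY n) := (map_gY v).symm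
    rw [e, ← RingHom.map_det]
    exact (map_ne_zero_iff _ hvi).2 (det_gY_ne hn)
  have hC : (gC hn Xm).det ≠ 0 := by
    have e : gC hn Xm = (aeval (R := ℂ) v).toRingHom.mapMatrix (gC hn (gX n)) := (map_gC hn v).symm
    rw [e, ← RingHom.map_det]
    exact (map_ne_zero_iff _ hvi).2 (det_gC_ne hn)
  obtain ⟨δ, hδ⟩ := IsAlgClosed.exists_pow_nat_eq (Xm.det)⁻¹ (by omega : 0 < n)
  obtain ⟨ε, hε⟩ := IsAlgClosed.exists_pow_nat_eq (Ym.det)⁻¹ (by omega : 0 < n)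
  have hδ0 : δ ≠ 0 := by
    rintro rfl
    rw [zero_pow (by omega)] at hδ
    exact inv_ne_zero hX hδ.symm
  have hε0 : ε ≠ 0 := by
    rintro rfl
    rw [zero_pow (by omega)] at hε
    exact inv_ne_zero hY hε.symm
  have hcomm : Commute Xm Ym :=
    Commute.sum_right _ _ _ fun k _ => ((Commute.refl Xm).pow_right _).smul_right _
  refine ⟨L, inferInstance, inferInstance, δ • Xm, ε • Ym, v, δ, ε, ?_, ?_, ?_, hv, ?_⟩
  · rw [Matrix.det_smul, Fintype.card_fin, hδ, inv_mul_cancel₀ hX]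
  · rw [Matrix.det_smul, Fintype.card_fin, hε, inv_mul_cancel₀ hY]
  · exact (hcomm.smul_left δ).smul_right ε
  · intro M hx hy hδM hεM
    have hXM : ∀ i j, Xm i j ∈ M := by
      intro i j
      have : Xm i j = δ⁻¹ * (δ • Xm) i j := by
        rw [Matrix.smul_apply, smul_eq_mul, inv_mul_cancel_left₀ hδ0]
      rw [this]
      exact mul_mem (inv_mem hδM) (hx i j)
    have hYM : ∀ i j, Ym i j ∈ M := by
      intro i j
      have : Ym i j = ε⁻¹ * (ε • Ym) i j := by
        rw [Matrix.smul_apply, smul_eq_mul, inv_mul_cancel_left₀ hε0]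
      rw [this]
      exact mul_mem (inv_mem hεM) (hy i j)
    have hpow : ∀ k : ℕ, ∀ i j, (Xm ^ k) i j ∈ M := by
      intro k
      induction k with
      | zero =>
        intro i j
        rw [pow_zero, Matrix.one_apply]
        split_ifs
        · exact one_mem M
        · exact zero_mem M
      | succ k ih =>
        rw [pow_succ]
        exact mul_mem_mat M _ _ ih hXM
    have hCM : ∀ i j, (gC hn Xm) i j ∈ M := fun i j => hpow _ _ _
    rintro (⟨i, j⟩ | k)
    · exact hXM i j
    · have h1 : (gC hn Xm).mulVec (fun k => v (Sum.inr k)) = fun i => Ym i ⟨0, hn⟩ := by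
        funext i
        simp only [Ym, gC, Matrix.mulVec, dotProduct, Matrix.of_apply, Matrix.sum_apply,
          Matrix.smul_apply, smul_eq_mul]
        exact Finset.sum_congr rfl fun k _ => mul_comm _ _
      have h2 : (fun k => v (Sum.inr k)) = (gC hn Xm)⁻¹.mulVec (fun i => Ym i ⟨0, hn⟩) := by
        rw [← h1, Matrix.mulVec_mulVec, Matrix.nonsing_inv_mul _ (isUnit_iff_ne_zero.2 hC),
          Matrix.one_mulVec]
      have h3 : v (Sum.inr k) = _ := congrFun h2 k
      rw [h3]
      change ∑ i, (gC hn Xm)⁻¹ k i * Ym i ⟨0, hn⟩ ∈ M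
      exact sum_mem fun i _ => mul_mem (inv_mem_mat M _ hCM k i) (hYM _ _)

end lower


section final
open MvPolynomial

/-- The defining ideal. -/
noncomputable def commI (n : ℕ) : Ideal (MvPolynomial ((Fin n × Fin n) ⊕ (Fin n × Fin n)) ℂ) :=
  Ideal.span
          ({p | ∃ i j, p = (genX n * genY n - genY n * genX n) i j} ∪
            {(genX n).det - 1, (genY n).det - 1})

theorem exists_hom {n : ℕ} {L : Type*} [Field L] [Algebra ℂ L] (x y : Matrix (Fin n) (Fin n) L)
    (hx : x.det = 1) (hy : y.det = 1) (hxy : x * y = y * x) :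
    ∃ φ : (MvPolynomial ((Fin n × Fin n) ⊕ (Fin n × Fin n)) ℂ ⧸ commI n) →ₐ[ℂ] L,
      (∀ i j, φ (Ideal.Quotient.mk _ (genX n i j)) = x i j) ∧
      (∀ i j, φ (Ideal.Quotient.mk _ (genY n i j)) = y i j) := by
  let f : MvPolynomial ((Fin n × Fin n) ⊕ (Fin n × Fin n)) ℂ →ₐ[ℂ] L :=
    aeval (Sum.elim (fun p => x p.1 p.2) (fun p => y p.1 p.2))
  have hfx : f.toRingHom.mapMatrix (genX n) = x := by
    ext i j
    simp [f, genX]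
  have hfy : f.toRingHom.mapMatrix (genY n) = y := by
    ext i j
    simp [f, genY]
  have hle : commI n ≤ RingHom.ker f.toRingHom := by
    rw [commI, Ideal.span_le]
    rintro p (⟨i, j, rfl⟩ | rfl | rfl)
    · have h : f.toRingHom.mapMatrix (genX n * genY n - genY n * genX n) = 0 := by
        rw [map_sub, map_mul, map_mul, hfx, hfy, hxy, sub_self]
      exact congrFun (congrFun h i) j
    · change f.toRingHom _ = 0
      rw [map_sub, RingHom.map_det, hfx, hx, map_one, sub_self]
    · change f.toRingHom _ = 0
      rw [map_sub, RingHom.map_det, hfy, hy, map_one, sub_self]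
  refine ⟨Ideal.Quotient.liftₐ (commI n) f (fun a ha => hle ha), fun i j => ?_, fun i j => ?_⟩
  · exact congrFun (congrFun hfx i) j
  · exact congrFun (congrFun hfy i) j

theorem rel_of_hom {n : ℕ} {L : Type*} [Field L] [Algebra ℂ L]
    (φ : (MvPolynomial ((Fin n × Fin n) ⊕ (Fin n × Fin n)) ℂ ⧸ commI n) →ₐ[ℂ] L) :
    ∃ x y : Matrix (Fin n) (Fin n) L, x.det = 1 ∧ y.det = 1 ∧ x * y = y * x ∧
      ∀ M : IntermediateField ℂ L, (∀ i j, x i j ∈ M) → (∀ i j, y i j ∈ M) → ∀ r, φ r ∈ M := by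
  let f := φ.toRingHom.comp (Ideal.Quotient.mk (commI n))
  have hf : ∀ p ∈ commI n, f p = 0 := by
    intro p hp
    change φ.toRingHom (Ideal.Quotient.mk _ p) = 0
    rw [Ideal.Quotient.eq_zero_iff_mem.2 hp, map_zero]
  refine ⟨f.mapMatrix (genX n), f.mapMatrix (genY n), ?_, ?_, ?_, ?_⟩
  · have h := hf ((genX n).det - 1) (Ideal.subset_span (Or.inr (Or.inl rfl)))
    rwa [map_sub, RingHom.map_det, map_one, sub_eq_zero] at h
  · have h := hf ((genY n).det - 1) (Ideal.subset_span (Or.inr (Or.inr rfl)))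
    rwa [map_sub, RingHom.map_det, map_one, sub_eq_zero] at h
  · rw [← sub_eq_zero, ← map_mul, ← map_mul, ← map_sub]
    ext i j
    exact hf _ (Ideal.subset_span (Or.inl ⟨i, j, rfl⟩))
  · intro M hx hy r
    obtain ⟨p, rfl⟩ := Ideal.Quotient.mk_surjective r
    change f p ∈ M
    induction p using MvPolynomial.induction_on with
    | C a =>
      have : f (C a) = algebraMap ℂ L a := φ.commutes a
      rw [this]
      exact M.algebraMap_mem a
    | add p q hp hq => rw [map_add]; exact add_mem hp hq
    | mul_X p i hp =>
      rw [map_mul]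
      refine mul_mem hp ?_
      rcases i with ⟨i, j⟩ | ⟨i, j⟩
      · exact hx i j
      · exact hy i j

theorem mem_of_integral {R L : Type*} {d : ℕ} [CommRing R] [Algebra ℂ R] [Field L] [Algebra ℂ L]
    (g : MvPolynomial (Fin d) ℂ →ₐ[ℂ] R) (hg : g.IsIntegral) (φ : R →ₐ[ℂ] L)
    (M : IntermediateField ℂ L) (hM : RelClosed M) (h : ∀ i, φ (g (X i)) ∈ M) (r : R) :
    φ r ∈ M := by
  apply hM
  let k : MvPolynomial (Fin d) ℂ →ₐ[ℂ] M := aeval fun i => (⟨_, h i⟩ : M)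
  have hk : (algebraMap M L).comp k.toRingHom = φ.toRingHom.comp g.toRingHom := by
    have : M.val.comp k = φ.comp g := by
      ext i
      simp [k]
    exact congrArg AlgHom.toRingHom this
  obtain ⟨p, hp, hp'⟩ := hg r
  refine ⟨p.map k.toRingHom, hp.map _, ?_⟩
  rw [Polynomial.eval₂_map, hk]
  have := Polynomial.hom_eval₂ p g.toRingHom φ.toRingHom r
  exact this.symm.trans ((congrArg φ hp').trans (map_zero φ))

theorem noether_dim {R : Type} [CommRing R] [Algebra ℂ R] [Nontrivial R] [Algebra.FiniteType ℂ R] :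
    ∃ (d : ℕ) (g : MvPolynomial (Fin d) ℂ →ₐ[ℂ] R), g.IsIntegral ∧
      ringKrullDim R = ((d : ℕ) : WithBot (WithTop ℕ)) ∧
      ∃ (K : Type) (_ : Field K) (_ : Algebra ℂ K) (ψ : R →ₐ[ℂ] K),
        AlgebraicIndependent ℂ (fun i => ψ (g (X i))) := by
  obtain ⟨d, g, hg, hgi⟩ := exists_integral_inj_algHom_of_fg ℂ R
  refine ⟨d, g, hgi, ?_, ?_⟩
  · letI := g.toRingHom.toAlgebra
    haveI : Algebra.IsIntegral (MvPolynomial (Fin d) ℂ) R := ⟨hgi⟩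
    rw [dim_eq_of_integral (R := MvPolynomial (Fin d) ℂ) (S := R) hg,
      MvPolynomial.ringKrullDim_of_isNoetherianRing, ringKrullDim_eq_zero_of_field]
    simp
    rfl
  · obtain ⟨Q, hQ, hQ'⟩ : ∃ Q : Ideal R, Q.IsPrime ∧ Q.comap g.toRingHom = ⊥ := by
      letI := g.toRingHom.toAlgebra
      haveI : Algebra.IsIntegral (MvPolynomial (Fin d) ℂ) R := ⟨hgi⟩
      obtain ⟨Q, -, hQ, hQ'⟩ := Ideal.exists_ideal_over_prime_of_isIntegral (S := R)
        (⊥ : Ideal (MvPolynomial (Fin d) ℂ)) ⊥ (by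
          rw [← RingHom.ker_eq_comap_bot]
          exact ((RingHom.injective_iff_ker_eq_bot g.toRingHom).1 hg).le)
      exact ⟨Q, hQ, hQ'⟩
    let ψ : R →ₐ[ℂ] FractionRing (R ⧸ Q) :=
      (IsScalarTower.toAlgHom ℂ (R ⧸ Q) (FractionRing (R ⧸ Q))).comp (Ideal.Quotient.mkₐ ℂ Q)
    refine ⟨FractionRing (R ⧸ Q), inferInstance, inferInstance, ψ, ?_⟩
    have h0 : aeval (fun i => ψ (g (X i))) = ψ.comp g := by
      ext i
      simp
    rw [algebraicIndependent_iff_injective_aeval, h0, injective_iff_map_eq_zero]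
    intro p hp
    have h1 : Ideal.Quotient.mk Q (g p) = 0 :=
      IsFractionRing.injective (R ⧸ Q) (FractionRing (R ⧸ Q)) (hp.trans (map_zero _).symm)
    rw [Ideal.Quotient.eq_zero_iff_mem] at h1
    have h2 : p ∈ Q.comap g.toRingHom := h1
    rw [hQ'] at h2
    exact h2

theorem dim_commI (n : ℕ) (hn : 1 ≤ n) :
    ringKrullDim (MvPolynomial ((Fin n × Fin n) ⊕ (Fin n × Fin n)) ℂ ⧸ commI n) =
    ((n ^ 2 + n - 2 : ℕ) : WithBot (WithTop ℕ)) := by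
  classical
  obtain ⟨L, _, _, x, y, v, δ, ε, hx, hy, hxy, hv, hM⟩ := lower hn
  obtain ⟨φ, hφx, hφy⟩ := exists_hom x y hx hy hxy
  have hnt : Nontrivial (MvPolynomial ((Fin n × Fin n) ⊕ (Fin n × Fin n)) ℂ ⧸ commI n) :=
    φ.toRingHom.domain_nontrivial
  obtain ⟨d, g, hgi, hdim, K, _, _, ψ, hψ⟩ :=
    noether_dim (R := MvPolynomial ((Fin n × Fin n) ⊕ (Fin n × Fin n)) ℂ ⧸ commI n)
  have h1 : d ≤ n ^ 2 + n - 2 := by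
    obtain ⟨x', y', hx', hy', hxy', hmem⟩ := rel_of_hom ψ
    obtain ⟨s, hs, hsM⟩ := upper hn x' y' hx' hy' hxy'
    have h := card_le_of_acl _ hψ s (fun M hMc hMs i =>
      hmem M (hsM M hMc hMs).1 (hsM M hMc hMs).2 _)
    rw [Fintype.card_fin] at h
    exact h.trans hs
  have h2 : n ^ 2 + n ≤ d + 2 := by
    let s : Finset L := (Finset.univ.image fun i : Fin d => φ (g (X i))) ∪ {δ, ε}
    have hs : s.card ≤ d + 2 := by
      refine (Finset.card_union_le _ _).trans (add_le_add ?_ Finset.card_le_two)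
      exact Finset.card_image_le.trans (by simp)
    have h := card_le_of_acl v hv s (fun M hMc hMs => by
      have hr := mem_of_integral g hgi φ M hMc (fun i => hMs _ (by simp [s]))
      refine hM M (fun i j => ?_) (fun i j => ?_) (hMs _ (by simp [s])) (hMs _ (by simp [s]))
      · rw [← hφx]; exact hr _
      · rw [← hφy]; exact hr _)
    simp only [Fintype.card_sum, Fintype.card_prod, Fintype.card_fin] at h
    rw [pow_two]
    exact h.trans hs
  rw [hdim]
  congr 1
  have : d = n ^ 2 + n - 2 := by omega
  rw [this]

end final


open MvPolynomial

/-- The coordinate ring of the commuting variety `C(SL_n)` has Krull dimension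
`n² + n - 2 = (n² - 1) + (n - 1)`. -/
theorem krullDim_commutingVariety_SL (n : ℕ) (hn : 1 ≤ n) :
    ringKrullDim
      ((MvPolynomial ((Fin n × Fin n) ⊕ (Fin n × Fin n)) ℂ) ⧸
        Ideal.span
          ({p | ∃ i j, p = (genX n * genY n - genY n * genX n) i j} ∪
            {(genX n).det - 1, (genY n).det - 1})) =
    ((n ^ 2 + n - 2 : ℕ) : WithBot (WithTop ℕ)) := by
  exact dim_commI n hn
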